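/- With g(τ) = 2Kτ² + τ⁴ + (8/(15√γ))τ⁵, K < 0, and τ₀ the positive stationary point of g, the stationary phase approximation of J(S) = 2∫_0^∞ e^{-(i/2)S⁵ g(τ)} τ dτ yields S^{5/2}|J(S)| → 2τ₀ √(4π/g''(τ₀)) = √(2π/(1+τ₀/√γ)) as S → +∞. -/

import Mathlib

open Real Complex Filter intervalIntegral

/-- First-derivative (van der Corput) bound: if `F' = c p w F` with `‖F‖ ≤ 1`, `p` nondecreasing and
`|p| ≥ μ > 0` on `[a, b]`, then `∫ w F` is at most `4 / (μ ‖c‖)`. -/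
theorem norm_integral_mul_le_of_hasDerivAt {a b μ : ℝ} (hab : a ≤ b) (hμ : 0 < μ) {c : ℂ}
    (hc : c ≠ 0) {F : ℝ → ℂ} {p p' w : ℝ → ℝ}
    (hF : ∀ x, HasDerivAt F (c * p x * w x * F x) x) (hF1 : ∀ x, ‖F x‖ ≤ 1)
    (hp : ∀ x, HasDerivAt p (p' x) x) (hp'c : Continuous p')
    (hp' : ∀ x ∈ Set.Icc a b, 0 ≤ p' x) (hpμ : ∀ x ∈ Set.Icc a b, μ ≤ |p x|)
    (hw : Continuous w) :
    ‖∫ x in a..b, F x * w x‖ ≤ 4 / (μ * ‖c‖) := by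
  have hp0 : ∀ x ∈ Set.Icc a b, p x ≠ 0 := fun x hx h => by
    have := hpμ x hx
    rw [h, abs_zero] at this
    linarith
  have hpC : Continuous p := continuous_iff_continuousAt.2 fun x => (hp x).continuousAt
  have hFC : Continuous F := continuous_iff_continuousAt.2 fun x => (hF x).continuousAt
  have hI : Set.uIcc a b = Set.Icc a b := Set.uIcc_of_le hab
  have hinv : ∀ x ∈ Set.Icc a b, HasDerivAt (fun y => (p y)⁻¹) (-(p' x) / (p x) ^ 2) x :=
    fun x hx => (hp x).inv (hp0 x hx)
  have hquot : ContinuousOn (fun x => p' x / (p x) ^ 2) (Set.uIcc a b) := by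
    rw [hI]
    exact hp'c.continuousOn.div (hpC.pow 2).continuousOn fun x hx => pow_ne_zero 2 (hp0 x hx)
  have hquotF : ContinuousOn (fun x => F x * ((p' x / (p x) ^ 2 : ℝ) : ℂ)) (Set.uIcc a b) :=
    hFC.continuousOn.mul (Complex.continuous_ofReal.comp_continuousOn hquot)
  have hparts : ∫ x in a..b, (c * (F x * w x) - F x * ((p' x / (p x) ^ 2 : ℝ) : ℂ))
      = F b * (((p b)⁻¹ : ℝ) : ℂ) - F a * (((p a)⁻¹ : ℝ) : ℂ) := by
    refine intervalIntegral.integral_eq_sub_of_hasDerivAt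
      (f := fun x => F x * (((p x)⁻¹ : ℝ) : ℂ)) (fun x hx => ?_) ?_
    · rw [hI] at hx
      have hpx : (p x : ℂ) ≠ 0 := by exact_mod_cast hp0 x hx
      refine ((hF x).mul (hinv x hx).ofReal_comp).congr_deriv ?_
      push_cast
      field_simp
      ring
    · refine ContinuousOn.intervalIntegrable (ContinuousOn.sub ?_ hquotF)
      exact Continuous.continuousOn (by fun_prop)
  rw [intervalIntegral.integral_sub
    (Continuous.intervalIntegrable (by fun_prop) _ _) hquotF.intervalIntegrable,
    intervalIntegral.integral_const_mul] at hparts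
  have hrem : ‖∫ x in a..b, F x * ((p' x / (p x) ^ 2 : ℝ) : ℂ)‖ ≤ (p a)⁻¹ - (p b)⁻¹ := by
    have hval : ∫ x in a..b, p' x / (p x) ^ 2 = (p a)⁻¹ - (p b)⁻¹ := by
      rw [intervalIntegral.integral_eq_sub_of_hasDerivAt (f := fun x => -(p x)⁻¹)
        (fun x hx => ?_) hquot.intervalIntegrable]
      · ring
      · rw [hI] at hx
        exact (hinv x hx).neg.congr_deriv (by ring)
    rw [← hval]
    refine intervalIntegral.norm_integral_le_of_norm_le hab
      (Eventually.of_forall fun x hx => ?_) hquot.intervalIntegrable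
    have h0 : 0 ≤ p' x / (p x) ^ 2 := div_nonneg (hp' x ⟨hx.1.le, hx.2⟩) (sq_nonneg _)
    rw [norm_mul, Complex.norm_real, Real.norm_of_nonneg h0]
    exact mul_le_of_le_one_left h0 (hF1 x)
  have hbd : ∀ x ∈ Set.Icc a b, |(p x)⁻¹| ≤ μ⁻¹ := fun x hx => by
    rw [abs_inv]
    exact inv_anti₀ hμ (hpμ x hx)
  have hend : ∀ x ∈ Set.Icc a b, ‖F x * (((p x)⁻¹ : ℝ) : ℂ)‖ ≤ μ⁻¹ := fun x hx => by
    rw [norm_mul, Complex.norm_real, Real.norm_eq_abs]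
    exact (mul_le_of_le_one_left (abs_nonneg _) (hF1 x)).trans (hbd x hx)
  have ha := Set.left_mem_Icc.2 hab
  have hb := Set.right_mem_Icc.2 hab
  have hmain : ‖c * ∫ x in a..b, F x * w x‖ ≤ 4 * μ⁻¹ := by
    rw [sub_eq_iff_eq_add.1 hparts]
    have h1 := norm_add_le (F b * (((p b)⁻¹ : ℝ) : ℂ) - F a * (((p a)⁻¹ : ℝ) : ℂ))
      (∫ x in a..b, F x * ((p' x / (p x) ^ 2 : ℝ) : ℂ))
    have h2 := norm_sub_le (F b * (((p b)⁻¹ : ℝ) : ℂ)) (F a * (((p a)⁻¹ : ℝ) : ℂ))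
    have h3 := hend a ha
    have h4 := hend b hb
    have h5 := (abs_le.1 (hbd a ha)).2
    have h6 := (abs_le.1 (hbd b hb)).1
    linarith
  rw [norm_mul] at hmain
  have hc' : 0 < ‖c‖ := norm_pos_iff.2 hc
  rw [le_div_iff₀ (mul_pos hμ hc')]
  calc ‖∫ x in a..b, F x * w x‖ * (μ * ‖c‖) = μ * (‖c‖ * ‖∫ x in a..b, F x * w x‖) := by ring
    _ ≤ μ * (4 * μ⁻¹) := by gcongr
    _ = 4 := by field_simp

/-- The truncated Gaussian integral differs from the full one by `O(1 / (M ‖b‖))`, uniformly in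
`b` with positive real part. -/
theorem norm_integral_gaussian_sub_le {b : ℂ} (hb : 0 < b.re) {M : ℝ} (hM : 0 < M) :
    ‖(π / b : ℂ) ^ (1 / 2 : ℂ) - ∫ v in -M..M, cexp (-b * v ^ 2)‖ ≤ 4 / (M * ‖b‖) := by
  have hb0 : b ≠ 0 := fun h => by simp [h] at hb
  have hC : Continuous fun v : ℝ => cexp (-b * v ^ 2) := by fun_prop
  have hder : ∀ x : ℝ, HasDerivAt (fun v : ℝ => cexp (-b * v ^ 2))
      (-2 * b * ((id x : ℝ) : ℂ) * ((1 : ℝ) : ℂ) * cexp (-b * x ^ 2)) x := fun x => by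
    refine ((((hasDerivAt_id x).ofReal_comp).pow 2).const_mul (-b)).cexp.congr_deriv ?_
    simp
    ring
  have hone : ∀ x : ℝ, ‖cexp (-b * x ^ 2)‖ ≤ 1 := fun x => by
    rw [Complex.norm_exp, Real.exp_le_one_iff]
    have : (-b * (x : ℂ) ^ 2).re = -(b.re * x ^ 2) := by
      rw [← Complex.ofReal_pow, Complex.re_mul_ofReal, Complex.neg_re]
      ring
    rw [this]
    have := mul_nonneg hb.le (sq_nonneg x)
    linarith
  have htail : ∀ u v : ℝ, u ≤ v → (∀ x ∈ Set.Icc u v, M ≤ |x|) →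
      ‖∫ x in u..v, cexp (-b * x ^ 2)‖ ≤ 4 / (M * (2 * ‖b‖)) := fun u v huv h => by
    have := norm_integral_mul_le_of_hasDerivAt huv hM (c := -2 * b) (by simpa using hb0) hder hone
      (p := id) (p' := fun _ => 1) (w := fun _ => 1) (fun x => hasDerivAt_id x) continuous_const
      (fun _ _ => zero_le_one) h continuous_const
    simpa using this
  have hlim : Tendsto (fun R : ℝ => ∫ v in -R..R, cexp (-b * v ^ 2)) atTop
      (nhds ((π / b : ℂ) ^ (1 / 2 : ℂ))) := by
    rw [← integral_gaussian_complex hb]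
    exact MeasureTheory.intervalIntegral_tendsto_integral (integrable_cexp_neg_mul_sq hb)
      tendsto_neg_atTop_atBot tendsto_id
  refine le_of_tendsto (hlim.sub_const _).norm ?_
  filter_upwards [eventually_ge_atTop M] with R hR
  have hi : ∀ u v : ℝ, IntervalIntegrable (fun v : ℝ => cexp (-b * v ^ 2))
    MeasureTheory.volume u v := fun u v => hC.intervalIntegrable u v
  rw [← intervalIntegral.integral_add_adjacent_intervals (hi (-R) (-M)) (hi (-M) R),
    ← intervalIntegral.integral_add_adjacent_intervals (hi (-M) M) (hi M R)]
  have h1 := htail (-R) (-M) (by linarith) fun x hx => by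
    rw [abs_of_neg (by linarith [hx.2])]
    linarith [hx.2]
  have h2 := htail M R hR fun x hx => hx.1.trans (le_abs_self x)
  have h3 := norm_add_le (∫ x in -R..-M, cexp (-b * x ^ 2)) (∫ x in M..R, cexp (-b * x ^ 2))
  have h4 : 4 / (M * ‖b‖) = 4 / (M * (2 * ‖b‖)) + 4 / (M * (2 * ‖b‖)) := by
    have : ‖b‖ ≠ 0 := norm_ne_zero_iff.2 hb0
    field_simp
    norm_num
  rw [h4]
  refine le_trans (le_of_eq ?_) (h3.trans (add_le_add h1 h2))
  congr 1
  ring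

/-- Truncated Fresnel integrals converge at rate `O(1 / M)`. -/
theorem norm_integral_fresnel_sub_le {A : ℝ} (hA : 0 < A) {M : ℝ} (hM : 0 < M) :
    ‖(π / (A * I) : ℂ) ^ (1 / 2 : ℂ) - ∫ v in -M..M, cexp (-(A * I) * (v : ℂ) ^ 2)‖
      ≤ 4 / (M * A) := by
  have hA0 : (A : ℂ) * I ≠ 0 := by simp [hA.ne']
  have hnorm : ‖(A : ℂ) * I‖ = A := by simp [abs_of_pos hA]
  have hslit : (π / (A * I) : ℂ) ∈ Complex.slitPlane := by
    have h : (π / (A * I) : ℂ) = ((-(π / A) : ℝ) : ℂ) * I := by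
      have : (A : ℂ) ≠ 0 := by exact_mod_cast hA.ne'
      push_cast
      field_simp
      simp
    refine Complex.mem_slitPlane_iff.2 (Or.inr ?_)
    rw [h]
    simp [hA.ne', Real.pi_ne_zero]
  have hb : Continuous fun δ : ℝ => (δ : ℂ) + A * I := by fun_prop
  have hleft : Tendsto (fun δ : ℝ => (π / (δ + A * I) : ℂ) ^ (1 / 2 : ℂ)) (nhds 0)
      (nhds ((π / (A * I) : ℂ) ^ (1 / 2 : ℂ))) := by
    have h : ContinuousAt (fun δ : ℝ => (π / (δ + A * I) : ℂ)) 0 :=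
      continuousAt_const.div hb.continuousAt (by simpa using hA0)
    have := h.cpow (continuousAt_const (y := (1 / 2 : ℂ))) (by simpa using hslit)
    simpa [ContinuousAt] using this
  have hint : Continuous fun δ : ℝ => ∫ v in -M..M, cexp (-((δ : ℂ) + A * I) * (v : ℂ) ^ 2) :=
    intervalIntegral.continuous_parametric_intervalIntegral_of_continuous' (by fun_prop) _ _
  have hright : Tendsto (fun δ : ℝ => 4 / (M * ‖(δ : ℂ) + A * I‖)) (nhds 0)
      (nhds (4 / (M * A))) := by
    have : ContinuousAt (fun δ : ℝ => 4 / (M * ‖(δ : ℂ) + A * I‖)) 0 :=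
      continuousAt_const.div (by fun_prop) (by simp [hM.ne', hA.ne'])
    simpa [ContinuousAt, abs_of_pos hA] using this
  have hint0 := hint.tendsto 0
  simp only [Complex.ofReal_zero, zero_add] at hint0
  refine le_of_tendsto_of_tendsto ((hleft.sub hint0).norm.mono_left nhdsWithin_le_nhds)
    (hright.mono_left (nhdsWithin_le_nhds (s := Set.Ioi 0))) ?_
  filter_upwards [self_mem_nhdsWithin] with δ hδ
  exact norm_integral_gaussian_sub_le (by simpa using hδ) hM

theorem norm_fresnel {A : ℝ} (hA : 0 < A) :
    ‖(π / (A * I) : ℂ) ^ (1 / 2 : ℂ)‖ = √(π / A) := by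
  have h : (1 / 2 : ℂ) = ((1 / 2 : ℝ) : ℂ) := by push_cast; rfl
  rw [h, Complex.norm_cpow_real, norm_div, norm_mul, Complex.norm_I, mul_one, Complex.norm_real,
    Complex.norm_real, Real.norm_of_nonneg hA.le, Real.norm_of_nonneg Real.pi_pos.le,
    Real.sqrt_eq_rpow]

/-- A limit can be computed from approximations whose errors are `O(1 / M)`. -/
theorem tendsto_of_approx {f : ℝ → ℝ} {L C₁ C₂ : ℝ} {H : ℝ → ℝ → ℝ} {h : ℝ → ℝ}
    (hH : ∀ M, 0 < M → Tendsto (H M) atTop (nhds (h M)))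
    (hf : ∀ M, 0 < M → ∀ᶠ s in atTop, |f s - H M s| ≤ C₁ / M)
    (hL : ∀ M, 0 < M → |h M - L| ≤ C₂ / M) : Tendsto f atTop (nhds L) := by
  rw [Metric.tendsto_nhds]
  intro ε hε
  have hzero : Tendsto (fun M : ℝ => C₁ / M + C₂ / M) atTop (nhds 0) := by
    simpa using (tendsto_id.const_div_atTop C₁).add (tendsto_id.const_div_atTop C₂)
  obtain ⟨M, hM, hM0⟩ :=
    ((hzero.eventually_lt_const (half_pos hε)).and (eventually_gt_atTop 0)).exists
  filter_upwards [hf M hM0, Metric.tendsto_nhds.1 (hH M hM0) _ (half_pos hε)] with s h1 h2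
  rw [Real.dist_eq] at h2 ⊢
  have h3 := hL M hM0
  have h4 := abs_sub_le (f s) (H M s) L
  have h5 := abs_sub_le (H M s) (h M) L
  linarith

/-- The phase `2Kτ² + τ⁴ + cτ⁵`. -/
noncomputable def quinticPhase (K c τ : ℝ) : ℝ := 2 * K * τ ^ 2 + τ ^ 4 + c * τ ^ 5

/-- The quotient of the second-order Taylor remainder of `quinticPhase` at its stationary point `t`
by the square of the increment. -/
noncomputable def phaseQuotient (c t h : ℝ) : ℝ :=
  4 * t ^ 2 + 15 / 2 * c * t ^ 3 + (4 * t + 10 * c * t ^ 2) * h + (1 + 5 * c * t) * h ^ 2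
    + c * h ^ 3

theorem quinticPhase_add {K c t : ℝ} (hroot : K + t ^ 2 + 5 / 4 * c * t ^ 3 = 0) (h : ℝ) :
    quinticPhase K c (t + h) = quinticPhase K c t + h ^ 2 * phaseQuotient c t h := by
  obtain rfl : K = -t ^ 2 - 5 / 4 * c * t ^ 3 := by linarith
  unfold quinticPhase phaseQuotient
  ring

theorem continuous_quinticPhase (K c : ℝ) : Continuous (quinticPhase K c) := by
  unfold quinticPhase
  fun_prop

theorem continuous_phaseQuotient (c t : ℝ) : Continuous (phaseQuotient c t) := by
  unfold phaseQuotient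
  fun_prop

theorem norm_cexp_neg_I_half_mul (s x : ℝ) : ‖cexp (-(I / 2) * (s : ℂ) ^ 2 * (x : ℂ))‖ = 1 := by
  have : -(I / 2) * (s : ℂ) ^ 2 * (x : ℂ) = ((-(s ^ 2 * x / 2) : ℝ) : ℂ) * I := by
    push_cast
    ring
  rw [this, Complex.norm_exp_ofReal_mul_I]

/-- Away from the stationary point the oscillatory integral is `O(s⁻²)`. -/
theorem norm_integral_quinticPhase_le {K c t : ℝ} (hc : 0 < c) (ht : 0 < t)
    (hroot : K + t ^ 2 + 5 / 4 * c * t ^ 3 = 0) {s δ a b : ℝ} (hs : 0 < s) (hδ : 0 < δ)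
    (ha : 0 ≤ a) (hab : a ≤ b) (hsep : ∀ x ∈ Set.Icc a b, δ ≤ |x - t|) :
    ‖∫ τ in a..b, cexp (-(I / 2) * (s : ℂ) ^ 2 * (quinticPhase K c τ : ℂ)) * τ‖
      ≤ 2 / (t * δ * s ^ 2) := by
  have hder : ∀ x : ℝ, HasDerivAt (quinticPhase K c)
      ((4 * (x ^ 2 - t ^ 2) + 5 * c * (x ^ 3 - t ^ 3)) * x) x := fun x => by
    have hx := hasDerivAt_id x
    refine ((((hx.pow 2).const_mul (2 * K)).add (hx.pow 4)).add
      ((hx.pow 5).const_mul c)).congr_deriv ?_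
    simp only [id]
    norm_num
    linear_combination 4 * x * hroot
  have h := norm_integral_mul_le_of_hasDerivAt (μ := 4 * t * δ) hab (by positivity)
    (c := -(I / 2) * (s : ℂ) ^ 2) (by simp [hs.ne'])
    (F := fun τ => cexp (-(I / 2) * (s : ℂ) ^ 2 * (quinticPhase K c τ : ℂ)))
    (p := fun x => 4 * (x ^ 2 - t ^ 2) + 5 * c * (x ^ 3 - t ^ 3))
    (p' := fun x => 8 * x + 15 * c * x ^ 2) (w := fun x => x) (fun x => ?_)
    (fun x => (norm_cexp_neg_I_half_mul s _).le) (fun x => ?_) (by fun_prop)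
    (fun x hx => ?_) (fun x hx => ?_) continuous_id
  · refine h.trans (le_of_eq ?_)
    have : ‖-(I / 2) * (s : ℂ) ^ 2‖ = s ^ 2 / 2 := by
      simp
      ring
    rw [this]
    field_simp
  · refine (((hder x).ofReal_comp).const_mul (-(I / 2) * (s : ℂ) ^ 2)).cexp.congr_deriv ?_
    push_cast
    ring
  · have hx := hasDerivAt_id x
    refine ((((hx.pow 2).sub_const (t ^ 2)).const_mul 4).add
      (((hx.pow 3).sub_const (t ^ 3)).const_mul (5 * c))).congr_deriv ?_
    simp only [id]
    norm_num
    ring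
  · have : 0 ≤ x := ha.trans hx.1
    positivity
  · have hx0 : 0 ≤ x := ha.trans hx.1
    have hfac : 4 * (x ^ 2 - t ^ 2) + 5 * c * (x ^ 3 - t ^ 3)
        = (4 * t + (4 * x + 5 * c * (x ^ 2 + x * t + t ^ 2))) * (x - t) := by ring
    have hnn : 0 ≤ 4 * x + 5 * c * (x ^ 2 + x * t + t ^ 2) := by positivity
    rw [hfac, abs_mul, abs_of_nonneg (by positivity)]
    have := hsep x hx
    gcongr
    linarith

/-- Stationary phase for the quintic phase, with large parameter `s²/2` and amplitude `τ`. -/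
theorem tendsto_mul_norm_quinticPhase_integral {K c t : ℝ} (hc : 0 < c) (ht : 0 < t)
    (hroot : K + t ^ 2 + 5 / 4 * c * t ^ 3 = 0) {J : ℝ → ℂ}
    (hJ : ∀ s : ℝ, 0 < s → Tendsto (fun R : ℝ =>
      ∫ τ in (0 : ℝ)..R, cexp (-(I / 2) * (s : ℂ) ^ 2 * (quinticPhase K c τ : ℂ)) * τ)
      atTop (nhds (J s))) :
    Tendsto (fun s => s * ‖J s‖) atTop
      (nhds (t * √(π / (phaseQuotient c t 0 / 2)))) := by
  have hA : 0 < phaseQuotient c t 0 / 2 := by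
    simp only [phaseQuotient]
    positivity
  let rescaled : ℝ → ℝ → ℂ := fun M ε =>
    ∫ v in -M..M, cexp (-(I / 2) * v ^ 2 * (phaseQuotient c t (v * ε) : ℂ)) * ((t + v * ε : ℝ) : ℂ)
  have hrescaled : ∀ M, Continuous (rescaled M) := fun M => by
    have := continuous_phaseQuotient c t
    exact intervalIntegral.continuous_parametric_intervalIntegral_of_continuous' (by fun_prop) _ _
  refine tendsto_of_approx (H := fun M s => ‖rescaled M s⁻¹‖) (h := fun M => ‖rescaled M 0‖)
    (C₁ := 4 / t) (C₂ := t * (4 / (phaseQuotient c t 0 / 2)))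
    (fun M _ => (((hrescaled M).tendsto 0).comp tendsto_inv_atTop_zero).norm)
    (fun M hM => ?_) (fun M hM => ?_)
  · filter_upwards [eventually_gt_atTop (M / t)] with s hs
    have hs0 : 0 < s := (div_pos hM ht).trans hs
    have hMs : 0 < M / s := div_pos hM hs0
    have hMt : M / s < t := by
      rw [div_lt_iff₀ ht] at hs
      rw [div_lt_iff₀ hs0]
      linarith
    set F : ℝ → ℂ := fun τ => cexp (-(I / 2) * (s : ℂ) ^ 2 * (quinticPhase K c τ : ℂ)) * τ with hF
    have hFC : Continuous F := by
      have := continuous_quinticPhase K c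
      fun_prop
    have hi : ∀ u v : ℝ, IntervalIntegrable F MeasureTheory.volume u v :=
      fun u v => hFC.intervalIntegrable u v
    have hmid : s * ‖∫ τ in (t - M / s)..(t + M / s), F τ‖ = ‖rescaled M s⁻¹‖ := by
      have h1 := intervalIntegral.integral_comp_add_div (a := -M) (b := M) F hs0.ne' t
      rw [neg_div, ← sub_eq_add_neg] at h1
      have h2 : ∫ v in -M..M, F (t + v / s)
          = cexp (-(I / 2) * (s : ℂ) ^ 2 * (quinticPhase K c t : ℂ)) * rescaled M s⁻¹ := by
        rw [← intervalIntegral.integral_const_mul]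
        congr 1
        ext v
        simp only [hF]
        rw [quinticPhase_add hroot, ← mul_assoc, ← Complex.exp_add, ← div_eq_mul_inv]
        congr 2
        have : (s : ℂ) ≠ 0 := by exact_mod_cast hs0.ne'
        push_cast
        field_simp
        ring
      have h3 := congrArg norm h1
      rw [h2, norm_mul, norm_cexp_neg_I_half_mul, one_mul, norm_smul,
        Real.norm_of_nonneg hs0.le] at h3
      exact h3.symm
    have hclose : ‖J s - ∫ τ in (t - M / s)..(t + M / s), F τ‖
        ≤ 2 / (t * (M / s) * s ^ 2) + 2 / (t * (M / s) * s ^ 2) := by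
      refine le_of_tendsto ((hJ s hs0).sub_const _).norm ?_
      filter_upwards [eventually_ge_atTop (t + M / s)] with R hR
      have e1 := intervalIntegral.integral_add_adjacent_intervals (hi 0 (t - M / s))
        (hi (t - M / s) R)
      have e2 := intervalIntegral.integral_add_adjacent_intervals (hi (t - M / s) (t + M / s))
        (hi (t + M / s) R)
      have b1 := norm_integral_quinticPhase_le hc ht hroot hs0 hMs le_rfl
        (show 0 ≤ t - M / s by linarith) fun x hx => by
          rw [abs_sub_comm]
          exact le_trans (by linarith [hx.2]) (le_abs_self _)
      have b2 := norm_integral_quinticPhase_le hc ht hroot hs0 hMs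
        (show 0 ≤ t + M / s by linarith) hR fun x hx =>
          le_trans (by linarith [hx.1]) (le_abs_self _)
      rw [← e1, ← e2]
      refine le_trans (le_of_eq ?_) ((norm_add_le _ _).trans (add_le_add b1 b2))
      congr 1
      ring
    rw [← hmid, ← mul_sub, abs_mul, abs_of_pos hs0]
    calc s * |‖J s‖ - ‖∫ τ in (t - M / s)..(t + M / s), F τ‖|
        ≤ s * (2 / (t * (M / s) * s ^ 2) + 2 / (t * (M / s) * s ^ 2)) := by
          gcongr
          exact (abs_norm_sub_norm_le _ _).trans hclose
      _ = 4 / t / M := by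
          field_simp
          norm_num
  · have h0 : rescaled M 0
        = (∫ v in -M..M, cexp (-((phaseQuotient c t 0 / 2 : ℝ) * I) * (v : ℂ) ^ 2)) * t := by
      rw [← intervalIntegral.integral_mul_const]
      simp only [rescaled, mul_zero, add_zero]
      congr 1
      ext v
      congr 2
      push_cast
      ring
    rw [h0, norm_mul, Complex.norm_real, Real.norm_of_nonneg ht.le, ← norm_fresnel hA,
      mul_comm, ← mul_sub, abs_mul, abs_of_pos ht, mul_div_assoc, abs_sub_comm, div_div,
      mul_comm _ M]
    gcongr
    exact (abs_norm_sub_norm_le _ _).trans (norm_integral_fresnel_sub_le hA hM)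

/-- With `g(τ) = 2Kτ² + τ⁴ + (8/(15√γ))τ⁵`, `K < 0`, and `τ₀ > 0` the
positive stationary point (`K + τ₀² + (2/(3√γ))τ₀³ = 0`, so `g''(τ₀) = 8τ₀²(1+τ₀/√γ)`),
the stationary-phase approximation of `J(S) = 2∫_0^∞ e^{-(i/2)S⁵g(τ)} τ dτ` gives
`S^{5/2} |J(S)| → 2τ₀ √(4π/g''(τ₀)) = √(2π/(1+τ₀/√γ))` as `S → +∞`. -/
theorem stationary_phase_amplitude (γ K τ₀ : ℝ) (hγ : 0 < γ) (hK : K < 0)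
    (hτ₀ : 0 < τ₀) (hroot : K + τ₀ ^ 2 + (2 / (3 * Real.sqrt γ)) * τ₀ ^ 3 = 0)
    (J : ℝ → ℂ)
    (hJ : ∀ S : ℝ, 0 < S →
      Tendsto (fun R : ℝ =>
          2 * ∫ τ in (0 : ℝ)..R,
            Complex.exp (-(I / 2) * (S : ℂ) ^ 5 *
              ((2 * K * τ ^ 2 + τ ^ 4 + (8 / (15 * Real.sqrt γ)) * τ ^ 5 : ℝ) : ℂ)) * τ)
        atTop (nhds (J S))) :
    Tendsto (fun S : ℝ => S ^ ((5 : ℝ) / 2) * ‖J S‖) atTop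
      (nhds (2 * τ₀ * Real.sqrt (4 * Real.pi / (8 * τ₀ ^ 2 * (1 + τ₀ / Real.sqrt γ))))) ∧
    2 * τ₀ * Real.sqrt (4 * Real.pi / (8 * τ₀ ^ 2 * (1 + τ₀ / Real.sqrt γ)))
      = Real.sqrt (2 * Real.pi / (1 + τ₀ / Real.sqrt γ)) := by
  have hsq : 0 < √γ := Real.sqrt_pos.2 hγ
  have hamp : 2 * τ₀ * √(4 * π / (8 * τ₀ ^ 2 * (1 + τ₀ / √γ))) = √(2 * π / (1 + τ₀ / √γ)) := by
    have h : 2 * π / (1 + τ₀ / √γ)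
        = (2 * τ₀) ^ 2 * (4 * π / (8 * τ₀ ^ 2 * (1 + τ₀ / √γ))) := by
      field_simp
      norm_num
    rw [h, Real.sqrt_mul (sq_nonneg _), Real.sqrt_sq (by positivity)]
  refine ⟨?_, hamp⟩
  have hroot' : K + τ₀ ^ 2 + 5 / 4 * (8 / (15 * √γ)) * τ₀ ^ 3 = 0 := by
    rw [← hroot]
    field_simp
    ring
  have hcore := tendsto_mul_norm_quinticPhase_integral (J := fun s => J (s ^ (2 / 5 : ℝ)) / 2)
    (by positivity) hτ₀ hroot' fun s hs => by
      have hpow : ((s ^ (2 / 5 : ℝ) : ℝ) : ℂ) ^ 5 = (s : ℂ) ^ 2 := by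
        have : (s ^ (2 / 5 : ℝ)) ^ 5 = s ^ 2 := by
          rw [← Real.rpow_natCast, ← Real.rpow_mul hs.le, ← Real.rpow_natCast]
          norm_num
        exact_mod_cast this
      have h := (hJ _ (Real.rpow_pos_of_pos hs (2 / 5))).div_const 2
      simp only [hpow] at h
      simpa [quinticPhase] using h
  have hcomp := (hcore.comp (tendsto_rpow_atTop (show (0 : ℝ) < 5 / 2 by norm_num))).const_mul 2
  have hlim : 2 * (τ₀ * √(π / (phaseQuotient (8 / (15 * √γ)) τ₀ 0 / 2)))
      = 2 * τ₀ * √(4 * π / (8 * τ₀ ^ 2 * (1 + τ₀ / √γ))) := by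
    rw [← mul_assoc]
    congr 2
    simp only [phaseQuotient]
    field_simp
    ring
  rw [hlim] at hcomp
  refine hcomp.congr' ?_
  filter_upwards [eventually_gt_atTop 0] with S hS
  have hinv : (S ^ (5 / 2 : ℝ)) ^ (2 / 5 : ℝ) = S := by
    rw [← Real.rpow_mul hS.le]
    norm_num
  simp only [Function.comp_apply, hinv, norm_div, Complex.norm_ofNat]
  ring
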